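/- Let R be a semi-closed, left-linear, right-algebraic conditional rewrite system respecting an arity a : Σ → ℕ, and let S be a conditionally (R,a)-stable set of terms. For every i ∈ ℕ and all s,t ∈ S, if s →*_{β ∪ R_i} t then there exist s', t' such that s →β* s' →*_{R_i} t' and t →β* t'. -/

import Mathlib

/-!
The proof rests on the complete development `cd`, which contracts all β-redexes of a term
simultaneously, and on two facts about the conditional relation `→_{R_i}`.

* **Commutation** (`PB.commute`). If `s ▷ u` (parallel β) and `s →_{R_i} t`, then `u →*_{R_i} v`
  and `t ▷ v` for some `v`. Left-hand sides are algebraic and linear, so a parallel β-step from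
  `lσ` takes place inside `σ`; what remains is that the conditions of a rule survive a β-step of
  the substitution (`condP_stable`). This is an induction on `i`: if `dσ →* v *← cσ`, then `c` is
  closed and applicative, and `→_{R_{i-1}}` preserves applicative terms, so `v` is applicative and
  hence fixed by `▷`. Commutation at level `i - 1` then carries `dσ →* v` to `dσ' →* v`.

* **Development is monotone** (`RStep.cd`). If `s` respects the arity and `s →_{R_i} t`, then
  `cd s →*_{R_i} cd t`. A rewrite step creates no β-redex: right-hand sides are algebraic, and by
  the arity hypothesis an instance of a left-hand side is never applied to a further argument.

Given `s →*_{β ∪ R_i} t`, one keeps terms with `s →β* s' →*_{R_i} t'` and `t →β* t'` along the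
reduction. An `R_i`-step from `t` is absorbed by commutation. For a β-step `t → u`, the triangle
property yields `u ▷ cd t →β* cd t'`, and `s' →β* cd s' →*_{R_i} cd t'`.
-/


set_option autoImplicit false

/-- λ-terms over a signature `Sig`, in de Bruijn representation
(terms are identified up to α-conversion). -/
inductive Tm (Sig : Type) : Type
  | var : ℕ → Tm Sig
  | app : Tm Sig → Tm Sig → Tm Sig
  | lam : Tm Sig → Tm Sig
  | sym : Sig → Tm Sig

namespace Tm

variable {Sig : Type}

/-- Shift the free de Bruijn indices `≥ d` up by one. -/
def lift (d : ℕ) : Tm Sig → Tm Sig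
  | var n => if n < d then var n else var (n + 1)
  | app t u => app (lift d t) (lift d u)
  | lam t => lam (lift (d + 1) t)
  | sym f => sym f

/-- Lift a parallel substitution under one binder. -/
def up (σ : ℕ → Tm Sig) : ℕ → Tm Sig
  | 0 => var 0
  | n + 1 => lift 0 (σ n)

/-- Capture-avoiding (parallel) substitution. -/
def subst (σ : ℕ → Tm Sig) : Tm Sig → Tm Sig
  | var n => σ n
  | app t u => app (subst σ t) (subst σ u)
  | lam t => lam (subst (up σ) t)
  | sym f => sym f

def scons (u : Tm Sig) (σ : ℕ → Tm Sig) : ℕ → Tm Sig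
  | 0 => u
  | n + 1 => σ n

/-- `subst1 u t` substitutes `u` for the de Bruijn variable `0` in `t`. -/
def subst1 (u t : Tm Sig) : Tm Sig := subst (scons u var) t

/-- `FVar t n` : de Bruijn index `n` occurs free in `t`. -/
def FVar : Tm Sig → ℕ → Prop
  | var m, n => m = n
  | app t u, n => FVar t n ∨ FVar u n
  | lam t, n => FVar t (n + 1)
  | sym _, _ => False

/-- Closed terms. -/
def ClosedTm (t : Tm Sig) : Prop := ∀ n, ¬ FVar t n

def countVar : Tm Sig → ℕ → ℕ
  | var m, n => if m = n then 1 else 0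
  | app t u, n => countVar t n + countVar u n
  | lam t, n => countVar t (n + 1)
  | sym _, _ => 0

/-- Linear terms: each variable occurs at most once. -/
def LinearTm (t : Tm Sig) : Prop := ∀ n, countVar t n ≤ 1

/-- `appList h [t1, …, tn] = h t1 … tn`. -/
def appList (h : Tm Sig) : List (Tm Sig) → Tm Sig
  | [] => h
  | u :: us => appList (app h u) us

/-- Applicative terms: terms containing no abstraction. -/
inductive Applicative : Tm Sig → Prop
  | var (n : ℕ) : Applicative (var n)
  | sym (f : Sig) : Applicative (sym f)
  | app {t u : Tm Sig} : Applicative t → Applicative u → Applicative (app t u)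

/-- Algebraic terms: `t ::= x | f t1 … tn`. -/
inductive Algebraic : Tm Sig → Prop
  | var (n : ℕ) : Algebraic (var n)
  | symApp (f : Sig) (ts : List (Tm Sig)) :
      (∀ t ∈ ts, Algebraic t) → Algebraic (appList (sym f) ts)

/-- `Subterm s t` : `s` is a subterm of `t`. -/
inductive Subterm : Tm Sig → Tm Sig → Prop
  | refl (t : Tm Sig) : Subterm t t
  | appL {s t u : Tm Sig} : Subterm s t → Subterm s (app t u)
  | appR {s t u : Tm Sig} : Subterm s u → Subterm s (app t u)
  | lam {s t : Tm Sig} : Subterm s t → Subterm s (lam t)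

/-- `lamN m t = λ…λ.t` with `m` abstractions. -/
def lamN : ℕ → Tm Sig → Tm Sig
  | 0, t => t
  | m + 1, t => lam (lamN m t)

end Tm

/-- β-reduction: the smallest rewrite relation (closed under abstraction, left and
right application and substitution) with `(λ.t) u →β t[0 := u]`. -/
inductive Beta {Sig : Type} : Tm Sig → Tm Sig → Prop
  | beta (t u : Tm Sig) : Beta (Tm.app (Tm.lam t) u) (Tm.subst1 u t)
  | abs {t u : Tm Sig} : Beta t u → Beta (Tm.lam t) (Tm.lam u)
  | appL {t u v : Tm Sig} : Beta t u → Beta (Tm.app t v) (Tm.app u v)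
  | appR {t u v : Tm Sig} : Beta t u → Beta (Tm.app v t) (Tm.app v u)
  | substC (σ : ℕ → Tm Sig) {t u : Tm Sig} : Beta t u → Beta (Tm.subst σ t) (Tm.subst σ u)

/-- Tait–Martin-Löf parallel β-reduction: the smallest parallel rewrite relation
with `(λ.t₁) t₂ ▷β u₁[0 := u₂]` whenever `t₁ ▷β u₁` and `t₂ ▷β u₂`. -/
inductive PBeta {Sig : Type} : Tm Sig → Tm Sig → Prop
  | var (n : ℕ) : PBeta (Tm.var n) (Tm.var n)
  | sym (f : Sig) : PBeta (Tm.sym f) (Tm.sym f)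
  | app {t₁ u₁ t₂ u₂ : Tm Sig} : PBeta t₁ u₁ → PBeta t₂ u₂ →
      PBeta (Tm.app t₁ t₂) (Tm.app u₁ u₂)
  | abs {t u : Tm Sig} : PBeta t u → PBeta (Tm.lam t) (Tm.lam u)
  | substC (σ : ℕ → Tm Sig) {t u : Tm Sig} : PBeta t u → PBeta (Tm.subst σ t) (Tm.subst σ u)
  | beta {t₁ u₁ t₂ u₂ : Tm Sig} : PBeta t₁ u₁ → PBeta t₂ u₂ →
      PBeta (Tm.app (Tm.lam t₁) t₂) (Tm.subst1 u₂ u₁)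

/-- β-normal forms. -/
def BetaNormal {Sig : Type} (t : Tm Sig) : Prop := ∀ u, ¬ Beta t u

/-- `IsBnf t n` : `n` is a β-normal form of `t`. -/
def IsBnf {Sig : Type} (t n : Tm Sig) : Prop :=
  Relation.ReflTransGen Beta t n ∧ BetaNormal n

/-- Weakly β-normalizing terms. -/
def WNbeta {Sig : Type} (t : Tm Sig) : Prop := ∃ n, IsBnf t n

/-- Conditional rewrite rule `d1 = c1 ∧ … ∧ dn = cn ⊃ l ↦ r`:  every variable of
the `di`, `ci` and `r` occurs in `l`, and `l` is a non-variable algebraic term. -/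
structure CondRule (Sig : Type) where
  conds : List (Tm Sig × Tm Sig)
  lhs : Tm Sig
  rhs : Tm Sig
  lhs_alg : Tm.Algebraic lhs
  lhs_not_var : ∀ n, lhs ≠ Tm.var n
  fv_conds : ∀ p ∈ conds,
    (∀ n, Tm.FVar p.1 n → Tm.FVar lhs n) ∧ (∀ n, Tm.FVar p.2 n → Tm.FVar lhs n)
  fv_rhs : ∀ n, Tm.FVar rhs n → Tm.FVar lhs n

/-- Joinability: a common reduct. -/
def Joinable {α : Type} (R : α → α → Prop) (t u : α) : Prop :=
  ∃ v, Relation.ReflTransGen R t v ∧ Relation.ReflTransGen R u v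

/-- One stratum of conditional rewriting: the smallest rewrite relation such that
`lσ → rσ` for every rule whose conditions are joinable w.r.t. `prev`. -/
inductive CondStep {Sig : Type} (Rules : Set (CondRule Sig))
    (prev : Tm Sig → Tm Sig → Prop) : Tm Sig → Tm Sig → Prop
  | rule {ρ : CondRule Sig} (hρ : ρ ∈ Rules) (σ : ℕ → Tm Sig)
      (hconds : ∀ p ∈ ρ.conds, Joinable prev (Tm.subst σ p.1) (Tm.subst σ p.2)) :
      CondStep Rules prev (Tm.subst σ ρ.lhs) (Tm.subst σ ρ.rhs)
  | abs {t u : Tm Sig} : CondStep Rules prev t u →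
      CondStep Rules prev (Tm.lam t) (Tm.lam u)
  | appL {t u v : Tm Sig} : CondStep Rules prev t u →
      CondStep Rules prev (Tm.app t v) (Tm.app u v)
  | appR {t u v : Tm Sig} : CondStep Rules prev t u →
      CondStep Rules prev (Tm.app v t) (Tm.app v u)
  | substC (σ : ℕ → Tm Sig) {t u : Tm Sig} : CondStep Rules prev t u →
      CondStep Rules prev (Tm.subst σ t) (Tm.subst σ u)

/-- Stratified conditional rewriting `→_{R_i}`. -/
def CondRel {Sig : Type} (Rules : Set (CondRule Sig)) : ℕ → Tm Sig → Tm Sig → Prop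
  | 0 => fun _ _ => False
  | i + 1 => CondStep Rules (CondRel Rules i)

/-- Conditional rewriting `→_R = ⋃ i, →_{R_i}`. -/
def CondRew {Sig : Type} (Rules : Set (CondRule Sig)) (t u : Tm Sig) : Prop :=
  ∃ i, CondRel Rules i t u

/-- Stratified β-conditional rewriting `→_{R(β)_i}`: conditions are evaluated
w.r.t. `→_{β ∪ R(β)_{i-1}}`. -/
def BCondRel {Sig : Type} (Rules : Set (CondRule Sig)) : ℕ → Tm Sig → Tm Sig → Prop
  | 0 => fun _ _ => False
  | i + 1 => CondStep Rules (fun a b => Beta a b ∨ BCondRel Rules i a b)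

/-- β-conditional rewriting `→_{R(β)} = ⋃ i, →_{R(β)_i}`. -/
def BCondRew {Sig : Type} (Rules : Set (CondRule Sig)) (t u : Tm Sig) : Prop :=
  ∃ i, BCondRel Rules i t u

def IsConfluent {α : Type} (R : α → α → Prop) : Prop :=
  ∀ t u v, Relation.ReflTransGen R t u → Relation.ReflTransGen R t v →
    ∃ w, Relation.ReflTransGen R u w ∧ Relation.ReflTransGen R v w

def ConfluentOn {α : Type} (S : Set α) (R : α → α → Prop) : Prop :=
  ∀ t ∈ S, ∀ u v, Relation.ReflTransGen R t u → Relation.ReflTransGen R t v →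
    ∃ w, Relation.ReflTransGen R u w ∧ Relation.ReflTransGen R v w

def Commutes {α : Type} (R₁ R₂ : α → α → Prop) : Prop :=
  ∀ s u t, Relation.ReflTransGen R₁ s u → Relation.ReflTransGen R₂ s t →
    ∃ v, Relation.ReflTransGen R₂ u v ∧ Relation.ReflTransGen R₁ t v

def LeftLinear {Sig : Type} (Rules : Set (CondRule Sig)) : Prop :=
  ∀ ρ ∈ Rules, Tm.LinearTm ρ.lhs

/-- Semi-closed systems: in every rule the `ci` are closed applicative terms. -/
def SemiClosed {Sig : Type} (Rules : Set (CondRule Sig)) : Prop :=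
  ∀ ρ ∈ Rules, ∀ p ∈ ρ.conds, Tm.Applicative p.2 ∧ Tm.ClosedTm p.2

def RightApplicative {Sig : Type} (Rules : Set (CondRule Sig)) : Prop :=
  ∀ ρ ∈ Rules, Tm.Applicative ρ.rhs

def RightAlgebraic {Sig : Type} (Rules : Set (CondRule Sig)) : Prop :=
  ∀ ρ ∈ Rules, Tm.Algebraic ρ.rhs

/-- Algebraic systems: in every rule the `di`, `ci` and `r` are algebraic. -/
def AlgebraicSys {Sig : Type} (Rules : Set (CondRule Sig)) : Prop :=
  ∀ ρ ∈ Rules, (∀ p ∈ ρ.conds, Tm.Algebraic p.1 ∧ Tm.Algebraic p.2) ∧ Tm.Algebraic ρ.rhs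

/-- A term respects the arity `a` if it contains no subterm `f t1 … tn` with `n > a f`. -/
def RespectsArity {Sig : Type} (a : Sig → ℕ) (t : Tm Sig) : Prop :=
  ∀ (f : Sig) (ts : List (Tm Sig)),
    Tm.Subterm (Tm.appList (Tm.sym f) ts) t → ts.length ≤ a f

/-- A conditional rule respects `a` if the `di`, `ci` and both sides of `l ↦ r`
respect `a`, and `l = f l1 … lk` with `k = a f`. -/
def RuleRespectsArity {Sig : Type} (a : Sig → ℕ) (ρ : CondRule Sig) : Prop :=
  (∀ p ∈ ρ.conds, RespectsArity a p.1 ∧ RespectsArity a p.2) ∧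
  RespectsArity a ρ.lhs ∧ RespectsArity a ρ.rhs ∧
  ∃ (f : Sig) (ls : List (Tm Sig)), ρ.lhs = Tm.appList (Tm.sym f) ls ∧ ls.length = a f

def SysRespectsArity {Sig : Type} (a : Sig → ℕ) (Rules : Set (CondRule Sig)) : Prop :=
  ∀ ρ ∈ Rules, RuleRespectsArity a ρ

/-- `AN_a` : terms having a β-normal form, whose β-normal form respects `a`. -/
def ANset {Sig : Type} (a : Sig → ℕ) : Set (Tm Sig) :=
  {t | ∃ n, IsBnf t n ∧ RespectsArity a n}

/-- The rewrite relation of the unconditional system `R̄` containing `l ↦ di` and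
`l ↦ r` for each rule `d⃗ = c⃗ ⊃ l ↦ r` of `R`. -/
inductive BarRel {Sig : Type} (Rules : Set (CondRule Sig)) : Tm Sig → Tm Sig → Prop
  | ruleCond {ρ : CondRule Sig} (hρ : ρ ∈ Rules) {p : Tm Sig × Tm Sig} (hp : p ∈ ρ.conds)
      (σ : ℕ → Tm Sig) : BarRel Rules (Tm.subst σ ρ.lhs) (Tm.subst σ p.1)
  | ruleRhs {ρ : CondRule Sig} (hρ : ρ ∈ Rules) (σ : ℕ → Tm Sig) :
      BarRel Rules (Tm.subst σ ρ.lhs) (Tm.subst σ ρ.rhs)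
  | abs {t u : Tm Sig} : BarRel Rules t u → BarRel Rules (Tm.lam t) (Tm.lam u)
  | appL {t u v : Tm Sig} : BarRel Rules t u → BarRel Rules (Tm.app t v) (Tm.app u v)
  | appR {t u v : Tm Sig} : BarRel Rules t u → BarRel Rules (Tm.app v t) (Tm.app v u)
  | substC (σ : ℕ → Tm Sig) {t u : Tm Sig} : BarRel Rules t u →
      BarRel Rules (Tm.subst σ t) (Tm.subst σ u)

/-- Conditionally `(R, a)`-stable sets of terms. -/
def CondStable {Sig : Type} (Rules : Set (CondRule Sig)) (a : Sig → ℕ)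
    (S : Set (Tm Sig)) : Prop :=
  (∀ t ∈ S, RespectsArity a t) ∧
  (∀ t ∈ S, ∀ u, (Beta t u ∨ BarRel Rules t u) → u ∈ S) ∧
  (∀ t ∈ S, ∀ u, Tm.Subterm u t → u ∈ S)

/-- Head β-step along an application spine. -/
inductive HeadAux {Sig : Type} : Tm Sig → Tm Sig → Prop
  | beta (b a₀ : Tm Sig) : HeadAux (Tm.app (Tm.lam b) a₀) (Tm.subst1 a₀ b)
  | app {t u : Tm Sig} (v : Tm Sig) : HeadAux t u → HeadAux (Tm.app t v) (Tm.app u v)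

/-- Head β-reduction `→h` : `λx⃗.(λy.b) a₀ a₁ … aₙ →h λx⃗.b[y:=a₀] a₁ … aₙ`. -/
inductive HeadRed {Sig : Type} : Tm Sig → Tm Sig → Prop
  | base {t u : Tm Sig} : HeadAux t u → HeadRed t u
  | lam {t u : Tm Sig} : HeadRed t u → HeadRed (Tm.lam t) (Tm.lam u)

/-- The relation `≻` : (a) `λx⃗.v a1 … an ≻ ai` for `v` a variable or a symbol and
`n > 0`; (b) `λx⃗.(λy.b) a0 a1 … an ≻ λx⃗.b[y:=a0] a1 … an` (a head β-step). -/
def SuccRel {Sig : Type} (t u : Tm Sig) : Prop :=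
  (∃ (m : ℕ) (h : Tm Sig) (args : List (Tm Sig)),
    ((∃ n, h = Tm.var n) ∨ (∃ f, h = Tm.sym f)) ∧ args ≠ [] ∧
    t = Tm.lamN m (Tm.appList h args) ∧ u ∈ args)
  ∨ HeadRed t u

/-- The nested parallelization `▷_{R_i}` of `→_{R_i}`: the smallest parallel rewrite
relation with `lσ ▷ rτ` whenever `lσ →_{R_i} rσ` and `σ ▷ τ`. -/
inductive NPar {Sig : Type} (Rules : Set (CondRule Sig)) (i : ℕ) : Tm Sig → Tm Sig → Prop
  | var (n : ℕ) : NPar Rules i (Tm.var n) (Tm.var n)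
  | sym (f : Sig) : NPar Rules i (Tm.sym f) (Tm.sym f)
  | app {t₁ u₁ t₂ u₂ : Tm Sig} : NPar Rules i t₁ u₁ → NPar Rules i t₂ u₂ →
      NPar Rules i (Tm.app t₁ t₂) (Tm.app u₁ u₂)
  | abs {t u : Tm Sig} : NPar Rules i t u → NPar Rules i (Tm.lam t) (Tm.lam u)
  | substC (σ : ℕ → Tm Sig) {t u : Tm Sig} : NPar Rules i t u →
      NPar Rules i (Tm.subst σ t) (Tm.subst σ u)
  | rule {ρ : CondRule Sig} (hρ : ρ ∈ Rules) (σ τ : ℕ → Tm Sig)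
      (hstep : CondRel Rules i (Tm.subst σ ρ.lhs) (Tm.subst σ ρ.rhs))
      (hστ : ∀ n, NPar Rules i (σ n) (τ n)) :
      NPar Rules i (Tm.subst σ ρ.lhs) (Tm.subst τ ρ.rhs)

/-- The smallest parallel rewrite relation containing `R`. -/
inductive ParCl {Sig : Type} (R : Tm Sig → Tm Sig → Prop) : Tm Sig → Tm Sig → Prop
  | base {t u : Tm Sig} : R t u → ParCl R t u
  | var (n : ℕ) : ParCl R (Tm.var n) (Tm.var n)
  | sym (f : Sig) : ParCl R (Tm.sym f) (Tm.sym f)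
  | app {t₁ u₁ t₂ u₂ : Tm Sig} : ParCl R t₁ u₁ → ParCl R t₂ u₂ →
      ParCl R (Tm.app t₁ t₂) (Tm.app u₁ u₂)
  | abs {t u : Tm Sig} : ParCl R t u → ParCl R (Tm.lam t) (Tm.lam u)
  | substC (σ : ℕ → Tm Sig) {t u : Tm Sig} : ParCl R t u →
      ParCl R (Tm.subst σ t) (Tm.subst σ u)

/-- A rooted β-conditional rewrite step `lσ →_{R(β)_i} rσ` for the rule `ρ` and the
substitution `σ`: `ρ ∈ R` and the conditions of `ρ` instantiated by `σ` are joinable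
w.r.t. `→_{β ∪ R(β)_{i-1}}`. -/
def RootedBStep {Sig : Type} (Rules : Set (CondRule Sig)) :
    ℕ → CondRule Sig → (ℕ → Tm Sig) → Prop
  | 0 => fun _ _ => False
  | i + 1 => fun ρ σ => ρ ∈ Rules ∧
      ∀ p ∈ ρ.conds,
        Joinable (fun a b => Beta a b ∨ BCondRel Rules i a b)
          (Tm.subst σ p.1) (Tm.subst σ p.2)

/-- Subterm at a position (positions only descend through applications, which is
enough for algebraic left-hand sides). -/
def subtermAt {Sig : Type} : Tm Sig → List Bool → Option (Tm Sig)
  | t, [] => some t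
  | Tm.app a _, false :: p => subtermAt a p
  | Tm.app _ b, true :: p => subtermAt b p
  | _, _ :: _ => none

/-- Replacement at a position. -/
def replaceAt {Sig : Type} : Tm Sig → List Bool → Tm Sig → Option (Tm Sig)
  | _, [], s => some s
  | Tm.app a b, false :: p, s => (replaceAt a p s).map (fun a' => Tm.app a' b)
  | Tm.app a b, true :: p, s => (replaceAt b p s).map (fun b' => Tm.app a b')
  | _, _ :: _, _ => none

/-- Conditional critical pairs: an overlap of `ρ₂` at a non-variable position `p` of
the left-hand side of `ρ₁` via a most general unifier (here presented with a pair of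
substitutions, which accounts for variable-disjoint renamings). -/
def CriticalPair {Sig : Type} (Rules : Set (CondRule Sig))
    (conds : List (Tm Sig × Tm Sig)) (s t : Tm Sig) : Prop :=
  ∃ ρ₁ ∈ Rules, ∃ ρ₂ ∈ Rules, ∃ (p : List Bool) (w : Tm Sig) (σ₁ σ₂ : ℕ → Tm Sig),
    subtermAt ρ₁.lhs p = some w ∧
    (∀ n, w ≠ Tm.var n) ∧
    ¬ (ρ₁ = ρ₂ ∧ p = []) ∧
    Tm.subst σ₁ w = Tm.subst σ₂ ρ₂.lhs ∧
    (∀ τ₁ τ₂ : ℕ → Tm Sig, Tm.subst τ₁ w = Tm.subst τ₂ ρ₂.lhs →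
      ∃ δ : ℕ → Tm Sig, (∀ n, Tm.FVar ρ₁.lhs n → τ₁ n = Tm.subst δ (σ₁ n)) ∧
        (∀ n, Tm.FVar ρ₂.lhs n → τ₂ n = Tm.subst δ (σ₂ n))) ∧
    conds = ρ₁.conds.map (fun q => (Tm.subst σ₁ q.1, Tm.subst σ₁ q.2)) ++
            ρ₂.conds.map (fun q => (Tm.subst σ₂ q.1, Tm.subst σ₂ q.2)) ∧
    replaceAt (Tm.subst σ₁ ρ₁.lhs) p (Tm.subst σ₂ ρ₂.rhs) = some s ∧
    t = Tm.subst σ₁ ρ₁.rhs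

/-- A symbol is defined if it heads the left-hand side of some rule. -/
def DefinedSym {Sig : Type} (Rules : Set (CondRule Sig)) (f : Sig) : Prop :=
  ∃ ρ ∈ Rules, ∃ ts : List (Tm Sig), ρ.lhs = Tm.appList (Tm.sym f) ts

/-- OrthonormalSys systems. -/
def OrthonormalSys {Sig : Type} (Rules : Set (CondRule Sig)) : Prop :=
  LeftLinear Rules ∧
  (∀ ρ ∈ Rules, ∀ p ∈ ρ.conds, Tm.ClosedTm p.2 ∧ BetaNormal p.2 ∧
    ∀ f, DefinedSym Rules f → ¬ Tm.Subterm (Tm.sym f) p.2) ∧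
  (∀ (conds : List (Tm Sig × Tm Sig)) (s t : Tm Sig), CriticalPair Rules conds s t →
    ∃ i j : Fin conds.length, i ≠ j ∧
      (conds.get i).1 = (conds.get j).1 ∧ (conds.get i).2 ≠ (conds.get j).2)

/-- Dershowitz–Manna multiset extension of `<` on `ℕ`. -/
def MulLt (s t : Multiset ℕ) : Prop :=
  ∃ X Y Z : Multiset ℕ, Y ≠ 0 ∧ s = Z + X ∧ t = Z + Y ∧ ∀ x ∈ X, ∃ y ∈ Y, x < y

open Relation

/-! ### Renamings and substitutions -/

namespace Tm

variable {Sig : Type}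

/-- Push a renaming of de Bruijn indices under one binder. -/
def upr (ξ : ℕ → ℕ) : ℕ → ℕ
  | 0 => 0
  | n + 1 => ξ n + 1

/-- Rename free de Bruijn indices. -/
def ren (ξ : ℕ → ℕ) : Tm Sig → Tm Sig
  | var n => var (ξ n)
  | app t u => app (ren ξ t) (ren ξ u)
  | lam t => lam (ren (upr ξ) t)
  | sym f => sym f

theorem lift_eq_ren (d : ℕ) (t : Tm Sig) :
    lift d t = ren (fun n => if n < d then n else n + 1) t := by
  induction t generalizing d with
  | var n => simp only [lift, ren]; split <;> rfl
  | app t u iht ihu => simp [lift, ren, iht, ihu]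
  | lam t ih =>
    simp only [lift, ren, ih]
    congr 2
    funext n
    cases n with
    | zero => simp [upr]
    | succ n => simp only [upr, Nat.add_lt_add_iff_right]; split <;> rfl
  | sym f => rfl

theorem lift_zero (t : Tm Sig) : lift 0 t = ren Nat.succ t := by
  rw [lift_eq_ren]; rfl

theorem ren_ren (ξ ζ : ℕ → ℕ) (t : Tm Sig) : ren ξ (ren ζ t) = ren (fun n => ξ (ζ n)) t := by
  induction t generalizing ξ ζ with
  | var n => rfl
  | app t u iht ihu => simp [ren, iht, ihu]
  | lam t ih =>
    simp only [ren, ih]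
    congr 2
    funext n
    cases n <;> rfl
  | sym f => rfl

theorem subst_ren (σ : ℕ → Tm Sig) (ξ : ℕ → ℕ) (t : Tm Sig) :
    subst σ (ren ξ t) = subst (fun n => σ (ξ n)) t := by
  induction t generalizing σ ξ with
  | var n => rfl
  | app t u iht ihu => simp [ren, subst, iht, ihu]
  | lam t ih =>
    simp only [ren, subst, ih]
    congr 2
    funext n
    cases n <;> rfl
  | sym f => rfl

theorem ren_subst (ξ : ℕ → ℕ) (σ : ℕ → Tm Sig) (t : Tm Sig) :
    ren ξ (subst σ t) = subst (fun n => ren ξ (σ n)) t := by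
  induction t generalizing σ ξ with
  | var n => rfl
  | app t u iht ihu => simp [ren, subst, iht, ihu]
  | lam t ih =>
    simp only [ren, subst, ih]
    congr 2
    funext n
    cases n with
    | zero => rfl
    | succ n => simp only [up, lift_zero, ren_ren]; rfl
  | sym f => rfl

theorem subst_up_lift (τ : ℕ → Tm Sig) (t : Tm Sig) :
    subst (up τ) (lift 0 t) = lift 0 (subst τ t) := by
  rw [lift_zero, lift_zero, subst_ren, ren_subst]
  congr 1
  funext n
  simp only [up, lift_zero]

theorem subst_subst (τ σ : ℕ → Tm Sig) (t : Tm Sig) :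
    subst τ (subst σ t) = subst (fun n => subst τ (σ n)) t := by
  induction t generalizing σ τ with
  | var n => rfl
  | app t u iht ihu => simp [subst, iht, ihu]
  | lam t ih =>
    simp only [subst, ih]
    congr 2
    funext n
    cases n with
    | zero => rfl
    | succ n => simp only [up, subst_up_lift]
  | sym f => rfl

theorem subst_var (t : Tm Sig) : subst var t = t := by
  induction t with
  | var n => rfl
  | app t u iht ihu => simp [subst, iht, ihu]
  | lam t ih =>
    have : up (var : ℕ → Tm Sig) = var := by
      funext n
      cases n <;> simp [up, lift]
    simp only [subst, this, ih]
  | sym f => rfl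

theorem ren_eq_subst (ξ : ℕ → ℕ) (t : Tm Sig) : ren ξ t = subst (fun n => var (ξ n)) t := by
  have h := ren_subst ξ var t
  rw [subst_var] at h
  rw [h]
  rfl

theorem subst_congr {σ τ : ℕ → Tm Sig} {t : Tm Sig} (h : ∀ n, FVar t n → σ n = τ n) :
    subst σ t = subst τ t := by
  induction t generalizing σ τ with
  | var n => exact h n rfl
  | app t u iht ihu =>
    simp only [subst]
    rw [iht fun n hn => h n (Or.inl hn), ihu fun n hn => h n (Or.inr hn)]
  | lam t ih =>
    simp only [subst]
    rw [ih]
    intro n hn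
    cases n with
    | zero => rfl
    | succ n => simp only [up]; rw [h n hn]
  | sym f => rfl

theorem subst_closed {t : Tm Sig} (h : ClosedTm t) (σ τ : ℕ → Tm Sig) :
    subst σ t = subst τ t := subst_congr fun n hn => absurd hn (h n)

theorem subst_subst1 (σ : ℕ → Tm Sig) (u t : Tm Sig) :
    subst σ (subst1 u t) = subst1 (subst σ u) (subst (up σ) t) := by
  unfold subst1
  rw [subst_subst, subst_subst]
  congr 1
  funext n
  cases n with
  | zero => rfl
  | succ n =>
    simp only [up, scons, subst, lift_zero, subst_ren]
    exact (subst_var _).symm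

theorem ren_subst1 (ξ : ℕ → ℕ) (u t : Tm Sig) :
    ren ξ (subst1 u t) = subst1 (ren ξ u) (ren (upr ξ) t) := by
  have h : (fun n => var (upr ξ n) : ℕ → Tm Sig) = up fun n => var (ξ n) := by
    funext n
    cases n <;> simp [upr, up, lift]
  rw [ren_eq_subst, ren_eq_subst, ren_eq_subst, subst_subst1, h]

theorem FVar_of_countVar {t : Tm Sig} {n : ℕ} : FVar t n → 0 < countVar t n := by
  induction t generalizing n with
  | var m => intro h; simp only [FVar] at h; simp [countVar, h]
  | app t u iht ihu =>
    rintro (h | h)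
    · have := iht h; simp only [countVar]; omega
    · have := ihu h; simp only [countVar]; omega
  | lam t ih => exact fun h => ih h
  | sym f => exact fun h => h.elim

theorem subst_appList (σ : ℕ → Tm Sig) (h : Tm Sig) (ts : List (Tm Sig)) :
    subst σ (appList h ts) = appList (subst σ h) (ts.map (subst σ)) := by
  induction ts generalizing h with
  | nil => rfl
  | cons t ts ih => simp [appList, ih, subst]

theorem appList_concat (h : Tm Sig) (ts : List (Tm Sig)) (v : Tm Sig) :
    appList h (ts ++ [v]) = app (appList h ts) v := by
  induction ts generalizing h with
  | nil => rfl
  | cons t ts ih => simp [appList, ih]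

/-! ### Algebraic and applicative terms -/

/-- Binary presentation of algebraic terms: `AlgB false t` says that `t` is algebraic, and
`AlgB true t` that it is moreover not a variable. -/
inductive AlgB : Bool → Tm Sig → Prop
  | var (n : ℕ) : AlgB false (var n)
  | sym (b : Bool) (f : Sig) : AlgB b (sym f)
  | app {b : Bool} {t u : Tm Sig} : AlgB true t → AlgB false u → AlgB b (app t u)

theorem AlgB.weaken {b : Bool} {t : Tm Sig} (h : AlgB true t) : AlgB b t := by
  cases h with
  | sym f => exact .sym _ _
  | app h₁ h₂ => exact .app h₁ h₂

theorem AlgB.appList {h : Tm Sig} (hh : AlgB true h) {ts : List (Tm Sig)}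
    (hts : ∀ t ∈ ts, AlgB false t) : AlgB true (appList h ts) := by
  induction ts generalizing h with
  | nil => exact hh
  | cons t ts ih =>
    exact ih (.app hh (hts t (by simp))) fun u hu => hts u (by simp [hu])

theorem Algebraic.algB {t : Tm Sig} (h : Algebraic t) : AlgB false t := by
  induction h with
  | var n => exact .var n
  | symApp f ts _ ih => exact (AlgB.appList (.sym _ f) ih).weaken

theorem AlgB.nonvar {t : Tm Sig} (h : AlgB false t) (hv : ∀ n, t ≠ .var n) : AlgB true t := by
  cases h with
  | var n => exact absurd rfl (hv n)
  | sym f => exact .sym _ _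
  | app h₁ h₂ => exact .app h₁ h₂

theorem AlgB.subst_ne_lam {t : Tm Sig} (h : AlgB true t) (σ : ℕ → Tm Sig) (x : Tm Sig) :
    subst σ t ≠ lam x := by
  cases h <;> simp [subst]

theorem AlgB.applicative {b : Bool} {t : Tm Sig} (h : AlgB b t) : Applicative t := by
  induction h with
  | var n => exact .var n
  | sym b f => exact .sym f
  | app _ _ ih₁ ih₂ => exact .app ih₁ ih₂

theorem Applicative.subst {t : Tm Sig} (h : Applicative t) {σ : ℕ → Tm Sig}
    (hσ : ∀ n, FVar t n → Applicative (σ n)) : Applicative (subst σ t) := by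
  induction h with
  | var n => exact hσ n rfl
  | sym f => exact .sym f
  | app _ _ ih₁ ih₂ =>
    exact .app (ih₁ fun n hn => hσ n (Or.inl hn)) (ih₂ fun n hn => hσ n (Or.inr hn))

theorem Applicative.of_subst {t : Tm Sig} {σ : ℕ → Tm Sig} (h : Applicative (Tm.subst σ t))
    {n : ℕ} (hn : FVar t n) : Applicative (σ n) := by
  induction t with
  | var m => cases hn; exact h
  | app t u iht ihu =>
    simp only [Tm.subst] at h
    cases h with
    | app h₁ h₂ =>
      rcases hn with hn | hn
      · exact iht h₁ hn
      · exact ihu h₂ hn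
  | lam t => simp only [Tm.subst] at h; cases h
  | sym f => exact hn.elim

end Tm

open Tm

/-! ### Parallel β-reduction and complete developments -/

section ParallelBeta

variable {Sig : Type}

/-- Parallel β-reduction, with closure under substitution left out of the generating clauses
(it is admissible, see `PB.subst`), so that steps can be inverted by cases on the source term. -/
inductive PB : Tm Sig → Tm Sig → Prop
  | var (n : ℕ) : PB (var n) (var n)
  | sym (f : Sig) : PB (sym f) (sym f)
  | app {t t' u u' : Tm Sig} : PB t t' → PB u u' → PB (app t u) (app t' u')
  | lam {t t' : Tm Sig} : PB t t' → PB (lam t) (lam t')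
  | beta {t t' u u' : Tm Sig} : PB t t' → PB u u' → PB (app (lam t) u) (subst1 u' t')

theorem PB.refl (t : Tm Sig) : PB t t := by
  induction t with
  | var n => exact .var n
  | app t u iht ihu => exact .app iht ihu
  | lam t ih => exact .lam ih
  | sym f => exact .sym f

theorem PB.ren {t t' : Tm Sig} (h : PB t t') (ξ : ℕ → ℕ) : PB (ren ξ t) (ren ξ t') := by
  induction h generalizing ξ with
  | var n => exact .var _
  | sym f => exact .sym f
  | app _ _ ih₁ ih₂ => exact .app (ih₁ ξ) (ih₂ ξ)
  | lam _ ih => exact .lam (ih _)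
  | beta _ _ ih₁ ih₂ =>
    rw [ren_subst1]
    exact .beta (ih₁ _) (ih₂ _)

theorem PB.up {σ τ : ℕ → Tm Sig} (h : ∀ n, PB (σ n) (τ n)) (n : ℕ) :
    PB (up σ n) (up τ n) := by
  cases n with
  | zero => exact .var 0
  | succ n => simp only [Tm.up, lift_zero]; exact (h n).ren _

theorem PB.subst {t t' : Tm Sig} (h : PB t t') {σ τ : ℕ → Tm Sig}
    (hσ : ∀ n, PB (σ n) (τ n)) : PB (subst σ t) (subst τ t') := by
  induction h generalizing σ τ with
  | var n => exact hσ n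
  | sym f => exact .sym f
  | app _ _ ih₁ ih₂ => exact .app (ih₁ hσ) (ih₂ hσ)
  | lam _ ih => exact .lam (ih (PB.up hσ))
  | beta _ _ ih₁ ih₂ =>
    rw [subst_subst1]
    exact .beta (ih₁ (PB.up hσ)) (ih₂ hσ)

theorem PB.subst1 {t t' u u' : Tm Sig} (h : PB t t') (hu : PB u u') :
    PB (subst1 u t) (subst1 u' t') := by
  refine h.subst fun n => ?_
  cases n with
  | zero => exact hu
  | succ n => exact .var n

theorem Beta.pb {t u : Tm Sig} (h : Beta t u) : PB t u := by
  induction h with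
  | beta t u => exact .beta (.refl t) (.refl u)
  | abs _ ih => exact .lam ih
  | appL _ ih => exact .app ih (.refl _)
  | appR _ ih => exact .app (.refl _) ih
  | substC σ _ ih => exact ih.subst fun n => .refl _

theorem PB.star {t u : Tm Sig} (h : PB t u) : ReflTransGen Beta t u := by
  induction h with
  | var n => exact .refl
  | sym f => exact .refl
  | @app t t' u u' _ _ ih₁ ih₂ =>
    exact (ih₁.lift (fun x => Tm.app x u) fun _ _ => Beta.appL).trans
      (ih₂.lift (fun x => Tm.app t' x) fun _ _ => Beta.appR)
  | lam _ ih => exact ih.lift Tm.lam fun _ _ => Beta.abs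
  | @beta t t' u u' _ _ ih₁ ih₂ =>
    exact ((ih₁.lift (fun x => Tm.app (Tm.lam x) u) fun _ _ h => Beta.appL (Beta.abs h)).trans
      (ih₂.lift (fun x => Tm.app (Tm.lam t') x) fun _ _ => Beta.appR)).tail (Beta.beta _ _)

theorem pbStar_beta {t u : Tm Sig} (h : ReflTransGen PB t u) : ReflTransGen Beta t u := by
  induction h with
  | refl => exact .refl
  | tail _ h ih => exact ih.trans h.star

/-- Applicative terms are fixed by parallel β-reduction. -/
theorem PB.eq_of_applicative {t u : Tm Sig} (h : PB t u) (ht : Applicative t) : u = t := by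
  induction h with
  | var n => rfl
  | sym f => rfl
  | app _ _ ih₁ ih₂ =>
    cases ht with
    | app h₁ h₂ => rw [ih₁ h₁, ih₂ h₂]
  | lam => cases ht
  | beta => cases ht with | app h₁ h₂ => cases h₁

/-- A parallel β-step from an instance `lσ` of a linear algebraic term is a step of `σ`. -/
theorem PB.algB_inv {b : Bool} {l : Tm Sig} (hl : AlgB b l) (hlin : LinearTm l)
    {σ : ℕ → Tm Sig} {w : Tm Sig} (h : PB (Tm.subst σ l) w) :
    ∃ τ : ℕ → Tm Sig, (∀ n, PB (σ n) (τ n)) ∧ w = Tm.subst τ l := by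
  induction hl generalizing w with
  | var m =>
    refine ⟨fun n => if n = m then w else σ n, fun n => ?_, by simp [Tm.subst]⟩
    dsimp only
    split
    · next hn => subst hn; exact h
    · exact .refl _
  | sym b f =>
    simp only [Tm.subst] at h
    cases h
    exact ⟨σ, fun n => .refl _, rfl⟩
  | @app b t u ht hu iht ihu =>
    simp only [Tm.subst] at h
    generalize ha : Tm.subst σ t = a at h
    cases h with
    | @app _ t' _ u' h₁ h₂ =>
      subst ha
      have hc : ∀ n, countVar t n + countVar u n ≤ 1 := hlin
      obtain ⟨τ₁, hτ₁, rfl⟩ := iht (fun n => by have := hc n; omega) h₁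
      obtain ⟨τ₂, hτ₂, rfl⟩ := ihu (fun n => by have := hc n; omega) h₂
      -- By linearity no variable is shared by `t` and `u`, so `τ₁` and `τ₂` can be glued.
      refine ⟨fun n => if countVar t n = 0 then τ₂ n else τ₁ n, fun n => ?_, ?_⟩
      · dsimp only
        split
        · exact hτ₂ n
        · exact hτ₁ n
      · simp only [Tm.subst]
        congr 1
        · refine subst_congr fun n hn => ?_
          have := FVar_of_countVar hn
          rw [if_neg (by omega)]
        · refine subst_congr fun n hn => ?_
          have := FVar_of_countVar hn
          have := hc n
          rw [if_pos (by omega)]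
    | beta h₁ h₂ => exact absurd ha (ht.subst_ne_lam σ _)

/-- The complete development of a term: all of its β-redexes are contracted at once. -/
def cd : Tm Sig → Tm Sig
  | .var n => .var n
  | .sym f => .sym f
  | .lam t => .lam (cd t)
  | .app (.lam t) u => subst1 (cd u) (cd t)
  | .app t u => .app (cd t) (cd u)

theorem cd_app {t : Tm Sig} (h : ∀ x, t ≠ .lam x) (u : Tm Sig) :
    cd (.app t u) = .app (cd t) (cd u) := by
  cases t with
  | lam x => exact absurd rfl (h x)
  | _ => rfl

/-- The triangle property of complete developments. -/
theorem PB.triangle {t u : Tm Sig} (h : PB t u) : PB u (cd t) := by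
  induction h with
  | var n => exact .var n
  | sym f => exact .sym f
  | @app t t' u u' h₁ h₂ ih₁ ih₂ =>
    by_cases ht : ∃ x, t = .lam x
    · obtain ⟨x, rfl⟩ := ht
      cases h₁ with
      | lam h₁ =>
        rw [cd] at ih₁
        rw [cd]
        cases ih₁ with
        | lam ih₁ => exact .beta ih₁ ih₂
    · rw [cd_app (fun x hx => ht ⟨x, hx⟩)]
      exact .app ih₁ ih₂
  | lam _ ih => rw [cd]; exact .lam ih
  | beta _ _ ih₁ ih₂ => rw [cd]; exact ih₁.subst1 ih₂

theorem PB.to_cd (t : Tm Sig) : PB t (cd t) := (PB.refl t).triangle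

theorem PB.cd {t u : Tm Sig} (h : PB t u) : PB (cd t) (cd u) := h.triangle.triangle

theorem cd_subst_algB {b : Bool} {l : Tm Sig} (hl : AlgB b l) (σ : ℕ → Tm Sig) :
    cd (subst σ l) = subst (fun n => cd (σ n)) l := by
  induction hl with
  | var n => rfl
  | sym b f => simp only [subst]; rw [cd]
  | app ht _ ih₁ ih₂ =>
    simp only [subst]
    rw [cd_app (ht.subst_ne_lam σ), ih₁, ih₂]

end ParallelBeta

/-! ### Conditional rewriting without the substitution clause -/

section Rewriting

variable {Sig : Type}

/-- The closure under contexts of the rooted steps `lσ → rσ` for the pairs `(ρ, σ)`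
satisfying `P`. -/
inductive RStep (P : CondRule Sig → (ℕ → Tm Sig) → Prop) : Tm Sig → Tm Sig → Prop
  | rule {ρ : CondRule Sig} (σ : ℕ → Tm Sig) (h : P ρ σ) :
      RStep P (subst σ ρ.lhs) (subst σ ρ.rhs)
  | abs {t u : Tm Sig} : RStep P t u → RStep P (.lam t) (.lam u)
  | appL {t u v : Tm Sig} : RStep P t u → RStep P (.app t v) (.app u v)
  | appR {t u v : Tm Sig} : RStep P t u → RStep P (.app v t) (.app v u)

/-- The conditions of the rule `ρ` hold for `σ` at level `i`. At level `0` no rule applies. -/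
def CondP (Rules : Set (CondRule Sig)) : ℕ → CondRule Sig → (ℕ → Tm Sig) → Prop
  | 0 => fun _ _ => False
  | i + 1 => fun ρ σ => ρ ∈ Rules ∧
      ∀ p ∈ ρ.conds, Joinable (CondRel Rules i) (subst σ p.1) (subst σ p.2)

theorem CondP.mem {Rules : Set (CondRule Sig)} {i : ℕ} {ρ : CondRule Sig} {σ : ℕ → Tm Sig}
    (h : CondP Rules i ρ σ) : ρ ∈ Rules := by
  cases i with
  | zero => exact h.elim
  | succ i => exact h.1

theorem CondRel.subst {Rules : Set (CondRule Sig)} {i : ℕ} {t u : Tm Sig} (σ : ℕ → Tm Sig)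
    (h : CondRel Rules i t u) : CondRel Rules i (subst σ t) (subst σ u) := by
  cases i with
  | zero => exact h.elim
  | succ i => exact CondStep.substC σ h

theorem CondP.subst {Rules : Set (CondRule Sig)} {i : ℕ} {ρ : CondRule Sig} {σ : ℕ → Tm Sig}
    (τ : ℕ → Tm Sig) (h : CondP Rules i ρ σ) : CondP Rules i ρ fun n => subst τ (σ n) := by
  cases i with
  | zero => exact h.elim
  | succ i =>
    refine ⟨h.1, fun p hp => ?_⟩
    obtain ⟨v, h₁, h₂⟩ := h.2 p hp
    rw [← subst_subst, ← subst_subst]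
    exact ⟨Tm.subst τ v, h₁.lift (Tm.subst τ) fun _ _ => CondRel.subst τ,
      h₂.lift (Tm.subst τ) fun _ _ => CondRel.subst τ⟩

theorem RStep.subst {Rules : Set (CondRule Sig)} {i : ℕ} {t u : Tm Sig}
    (h : RStep (CondP Rules i) t u) (σ : ℕ → Tm Sig) :
    RStep (CondP Rules i) (subst σ t) (subst σ u) := by
  induction h generalizing σ with
  | rule τ h =>
    rw [subst_subst, subst_subst]
    exact .rule _ (h.subst σ)
  | abs _ ih => exact .abs (ih _)
  | appL _ ih => exact .appL (ih σ)
  | appR _ ih => exact .appR (ih σ)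

/-- The substitution clause of `CondRel` is redundant. -/
theorem condRel_eq_rStep (Rules : Set (CondRule Sig)) (i : ℕ) :
    CondRel Rules i = RStep (CondP Rules i) := by
  funext t u
  refine propext ⟨fun h => ?_, fun h => ?_⟩
  · cases i with
    | zero => exact h.elim
    | succ i =>
      change CondStep Rules (CondRel Rules i) t u at h
      induction h with
      | rule hρ σ hc => exact .rule σ ⟨hρ, hc⟩
      | abs _ ih => exact .abs ih
      | appL _ ih => exact .appL ih
      | appR _ ih => exact .appR ih
      | substC σ _ ih => exact ih.subst σ
  · cases i with
    | zero =>
      induction h with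
      | rule σ h => exact h.elim
      | abs _ ih => exact ih
      | appL _ ih => exact ih
      | appR _ ih => exact ih
    | succ i =>
      change CondStep Rules (CondRel Rules i) t u
      induction h with
      | rule σ h => exact .rule h.1 σ h.2
      | abs _ ih => exact .abs ih
      | appL _ ih => exact .appL ih
      | appR _ ih => exact .appR ih

theorem RStep.barRel {Rules : Set (CondRule Sig)} {i : ℕ} {t u : Tm Sig}
    (h : RStep (CondP Rules i) t u) : BarRel Rules t u := by
  induction h with
  | rule σ h => exact .ruleRhs h.mem σ
  | abs _ ih => exact .abs ih
  | appL _ ih => exact .appL ih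
  | appR _ ih => exact .appR ih

theorem CondRule.lhs_algB (ρ : CondRule Sig) : AlgB true ρ.lhs :=
  ρ.lhs_alg.algB.nonvar ρ.lhs_not_var

theorem RStep.lam_inv {P : CondRule Sig → (ℕ → Tm Sig) → Prop} {t w : Tm Sig}
    (h : RStep P (.lam t) w) : ∃ u, w = .lam u ∧ RStep P t u := by
  generalize hs : Tm.lam t = s at h
  cases h with
  | rule σ _ => exact absurd hs.symm ((CondRule.lhs_algB _).subst_ne_lam σ t)
  | abs h => cases hs; exact ⟨_, rfl, h⟩
  | appL => cases hs
  | appR => cases hs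

theorem rStar_lam_inv {P : CondRule Sig → (ℕ → Tm Sig) → Prop} {t w : Tm Sig}
    (h : ReflTransGen (RStep P) (.lam t) w) :
    ∃ u, w = .lam u ∧ ReflTransGen (RStep P) t u := by
  induction h with
  | refl => exact ⟨t, rfl, .refl⟩
  | tail _ h ih =>
    obtain ⟨u, rfl, hu⟩ := ih
    obtain ⟨v, rfl, hv⟩ := h.lam_inv
    exact ⟨v, rfl, hu.tail hv⟩

theorem rStar_app {P : CondRule Sig → (ℕ → Tm Sig) → Prop} {t t' u u' : Tm Sig}
    (h₁ : ReflTransGen (RStep P) t t') (h₂ : ReflTransGen (RStep P) u u') :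
    ReflTransGen (RStep P) (.app t u) (.app t' u') :=
  (h₁.lift (fun x => Tm.app x u) fun _ _ => RStep.appL).trans
    (h₂.lift (fun x => Tm.app t' x) fun _ _ => RStep.appR)

theorem rStar_subst {Rules : Set (CondRule Sig)} {i : ℕ} (t : Tm Sig) {σ τ : ℕ → Tm Sig}
    (h : ∀ n, ReflTransGen (RStep (CondP Rules i)) (σ n) (τ n)) :
    ReflTransGen (RStep (CondP Rules i)) (subst σ t) (subst τ t) := by
  induction t generalizing σ τ with
  | var n => exact h n
  | app t u iht ihu => exact rStar_app (iht h) (ihu h)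
  | lam t ih =>
    suffices h' : ∀ n, ReflTransGen (RStep (CondP Rules i)) (up σ n) (up τ n) from
      (ih h').lift Tm.lam fun _ _ => RStep.abs
    intro n
    cases n with
    | zero => exact .refl
    | succ n =>
      simp only [up, lift_zero, ren_eq_subst]
      exact (h n).lift (Tm.subst _) fun _ _ hs => hs.subst _
  | sym f => exact .refl

theorem rStar_subst1 {Rules : Set (CondRule Sig)} {i : ℕ} {t t' u u' : Tm Sig}
    (ht : ReflTransGen (RStep (CondP Rules i)) t t')
    (hu : ReflTransGen (RStep (CondP Rules i)) u u') :
    ReflTransGen (RStep (CondP Rules i)) (subst1 u t) (subst1 u' t') := by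
  refine (ht.lift (subst1 u) fun _ _ hs => hs.subst _).trans (rStar_subst t' fun n => ?_)
  cases n with
  | zero => exact hu
  | succ n => exact .refl

theorem RStep.applicative {Rules : Set (CondRule Sig)} (hra : RightAlgebraic Rules) {i : ℕ}
    {t u : Tm Sig} (h : RStep (CondP Rules i) t u) (ht : Applicative t) : Applicative u := by
  induction h with
  | @rule ρ σ h =>
    exact (hra ρ h.mem).algB.applicative.subst fun n hn => ht.of_subst (ρ.fv_rhs n hn)
  | abs => cases ht
  | appL _ ih => cases ht with | app h₁ h₂ => exact .app (ih h₁) h₂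
  | appR _ ih => cases ht with | app h₁ h₂ => exact .app h₁ (ih h₂)

/-! ### Commutation of conditional rewriting with parallel β-reduction -/

/-- The conditions at level `i` are stable under parallel β-reduction of the substitution. -/
def StableP (Rules : Set (CondRule Sig)) (i : ℕ) : Prop :=
  ∀ (ρ : CondRule Sig) (σ τ : ℕ → Tm Sig), (∀ n, PB (σ n) (τ n)) →
    CondP Rules i ρ σ → CondP Rules i ρ τ

theorem PB.commute {Rules : Set (CondRule Sig)} (hll : LeftLinear Rules) {i : ℕ}
    (hst : StableP Rules i) {s t u : Tm Sig} (h : RStep (CondP Rules i) s t) (hu : PB s u) :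
    ∃ v, ReflTransGen (RStep (CondP Rules i)) u v ∧ PB t v := by
  induction h generalizing u with
  | @rule ρ σ h =>
    obtain ⟨τ, hτ, rfl⟩ := PB.algB_inv ρ.lhs_algB (hll ρ h.mem) hu
    exact ⟨_, .single (.rule τ (hst ρ σ τ hτ h)), (PB.refl ρ.rhs).subst hτ⟩
  | abs _ ih =>
    cases hu with
    | lam hu =>
      obtain ⟨v, h₁, h₂⟩ := ih hu
      exact ⟨_, h₁.lift Tm.lam fun _ _ => RStep.abs, .lam h₂⟩
  | @appL t t₁ w ht ih =>
    cases hu with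
    | app h₁ h₂ =>
      obtain ⟨v, hv, hv'⟩ := ih h₁
      exact ⟨_, rStar_app hv .refl, .app hv' h₂⟩
    | beta h₁ h₂ =>
      obtain ⟨v, hv, hv'⟩ := ih (.lam h₁)
      obtain ⟨x, rfl, -⟩ := ht.lam_inv
      obtain ⟨y, rfl, hy⟩ := rStar_lam_inv hv
      cases hv' with
      | lam hv' => exact ⟨_, rStar_subst1 hy .refl, .beta hv' h₂⟩
  | @appR t t₁ w _ ih =>
    cases hu with
    | app h₁ h₂ =>
      obtain ⟨v, hv, hv'⟩ := ih h₂
      exact ⟨_, rStar_app .refl hv, .app h₁ hv'⟩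
    | beta h₁ h₂ =>
      obtain ⟨v, hv, hv'⟩ := ih h₂
      exact ⟨_, rStar_subst1 .refl hv, .beta h₁ hv'⟩

theorem PB.commute_right {Rules : Set (CondRule Sig)} (hll : LeftLinear Rules) {i : ℕ}
    (hst : StableP Rules i) {s t u : Tm Sig} (h : ReflTransGen (RStep (CondP Rules i)) s t)
    (hu : PB s u) : ∃ v, ReflTransGen (RStep (CondP Rules i)) u v ∧ PB t v := by
  induction h with
  | refl => exact ⟨u, .refl, hu⟩
  | tail _ h ih =>
    obtain ⟨v, h₁, h₂⟩ := ih
    obtain ⟨w, h₃, h₄⟩ := h₂.commute hll hst h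
    exact ⟨w, h₁.trans h₃, h₄⟩

theorem PB.commute_star {Rules : Set (CondRule Sig)} (hll : LeftLinear Rules) {i : ℕ}
    (hst : StableP Rules i) {s t u : Tm Sig} (h : ReflTransGen (RStep (CondP Rules i)) s t)
    (hu : ReflTransGen PB s u) :
    ∃ v, ReflTransGen (RStep (CondP Rules i)) u v ∧ ReflTransGen PB t v := by
  induction hu with
  | refl => exact ⟨t, h, .refl⟩
  | tail _ hu ih =>
    obtain ⟨v, h₁, h₂⟩ := ih
    obtain ⟨w, h₃, h₄⟩ := hu.commute_right hll hst h₁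
    exact ⟨w, h₃, h₂.tail h₄⟩

theorem condP_stable {Rules : Set (CondRule Sig)} (hsc : SemiClosed Rules)
    (hll : LeftLinear Rules) (hra : RightAlgebraic Rules) (i : ℕ) : StableP Rules i := by
  induction i with
  | zero => exact fun _ _ _ _ h => h.elim
  | succ i ih =>
    rintro ρ σ τ hτ ⟨hρ, hc⟩
    refine ⟨hρ, fun p hp => ?_⟩
    obtain ⟨v, h₁, h₂⟩ := hc p hp
    obtain ⟨happ, hcl⟩ := hsc ρ hρ p hp
    rw [subst_closed hcl τ σ]
    rw [condRel_eq_rStep] at h₁ h₂ ⊢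
    have hv : Applicative v := by
      have h₀ : Applicative (Tm.subst σ p.2) := happ.subst fun n hn => absurd hn (hcl n)
      clear h₁
      induction h₂ with
      | refl => exact h₀
      | tail _ h ihv => exact h.applicative hra ihv
    obtain ⟨w, h₃, h₄⟩ := ((PB.refl p.1).subst hτ).commute_right hll ih h₁
    rw [h₄.eq_of_applicative hv] at h₃
    exact ⟨v, h₃, h₂⟩

/-! ### Complete developments of rewrite steps -/

theorem RespectsArity.subterm {a : Sig → ℕ} {t u : Tm Sig} (h : RespectsArity a t)
    (hu : ∀ s, Subterm s u → Subterm s t) : RespectsArity a u :=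
  fun f ts hs => h f ts (hu _ hs)

/-- A rewrite step in function position does not turn an application into a β-redex. -/
theorem RStep.ne_lam {Rules : Set (CondRule Sig)} {a : Sig → ℕ}
    (harr : SysRespectsArity a Rules) {i : ℕ} {t u v : Tm Sig}
    (h : RStep (CondP Rules i) t u) (ht : RespectsArity a (.app t v))
    (hlam : ∀ x, t ≠ .lam x) (x : Tm Sig) : u ≠ .lam x := by
  cases h with
  | @rule ρ σ h =>
    obtain ⟨-, -, -, f, ls, hl, hlen⟩ := harr ρ h.mem
    have := ht f (ls.map (Tm.subst σ) ++ [v]) (by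
      rw [appList_concat, hl, subst_appList]
      exact .refl _)
    simp at this
    omega
  | abs => exact absurd rfl (hlam _)
  | appL => simp
  | appR => simp

theorem RStep.cd {Rules : Set (CondRule Sig)} {a : Sig → ℕ}
    (harr : SysRespectsArity a Rules) (hra : RightAlgebraic Rules) {i : ℕ}
    (hst : StableP Rules i) {t u : Tm Sig} (h : RStep (CondP Rules i) t u)
    (ht : RespectsArity a t) : ReflTransGen (RStep (CondP Rules i)) (cd t) (cd u) := by
  induction h with
  | @rule ρ σ h =>
    rw [cd_subst_algB ρ.lhs_algB, cd_subst_algB (hra ρ h.mem).algB]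
    exact .single (.rule _ (hst ρ σ _ (fun n => PB.to_cd (σ n)) h))
  | abs _ ih =>
    rw [_root_.cd, _root_.cd]
    exact (ih (ht.subterm fun _ => .lam)).lift Tm.lam fun _ _ => RStep.abs
  | @appL t u v h ih =>
    have ih := ih (ht.subterm fun _ => .appL)
    by_cases hlam : ∃ x, t = .lam x
    · obtain ⟨x, rfl⟩ := hlam
      obtain ⟨y, rfl, -⟩ := h.lam_inv
      rw [_root_.cd, _root_.cd] at ih
      obtain ⟨z, hz, hxz⟩ := rStar_lam_inv ih
      cases hz
      rw [_root_.cd, _root_.cd]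
      exact rStar_subst1 hxz .refl
    · have hlam : ∀ x, t ≠ .lam x := fun x hx => hlam ⟨x, hx⟩
      rw [cd_app hlam, cd_app (h.ne_lam harr ht hlam)]
      exact rStar_app ih .refl
  | @appR t u v h ih =>
    have ih := ih (ht.subterm fun _ => .appR)
    by_cases hlam : ∃ x, v = .lam x
    · obtain ⟨x, rfl⟩ := hlam
      rw [_root_.cd, _root_.cd]
      exact rStar_subst1 .refl ih
    · have hlam : ∀ x, v ≠ .lam x := fun x hx => hlam ⟨x, hx⟩
      rw [cd_app hlam, cd_app hlam]
      exact rStar_app .refl ih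

theorem CondStable.beta_star {Rules : Set (CondRule Sig)} {a : Sig → ℕ} {S : Set (Tm Sig)}
    (hS : CondStable Rules a S) {t u : Tm Sig} (ht : t ∈ S) (h : ReflTransGen Beta t u) :
    u ∈ S := by
  induction h with
  | refl => exact ht
  | tail _ h ih => exact hS.2.1 _ ih _ (Or.inl h)

theorem CondStable.rStar_cd {Rules : Set (CondRule Sig)} {a : Sig → ℕ} {S : Set (Tm Sig)}
    (hS : CondStable Rules a S) (harr : SysRespectsArity a Rules)
    (hra : RightAlgebraic Rules) {i : ℕ} (hst : StableP Rules i) {t u : Tm Sig} (ht : t ∈ S)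
    (h : ReflTransGen (RStep (CondP Rules i)) t u) :
    ReflTransGen (RStep (CondP Rules i)) (cd t) (cd u) := by
  induction h using ReflTransGen.head_induction_on with
  | refl => exact .refl
  | head h _ ih =>
    exact (h.cd harr hra hst (hS.1 _ ht)).trans (ih (hS.2.1 _ ht _ (Or.inr h.barRel)))

end Rewriting

/-! ### Postponement -/

/-- For a semi-closed, left-linear, right-algebraic system `R`
respecting the arity `a` and a conditionally `(R,a)`-stable set `S`: for every `i`
and `s, t ∈ S`, if `s →*_{β ∪ R_i} t` then `s →β* s' →*_{R_i} t' ←β* t`. -/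
theorem beta_postponement_cond {Sig : Type} (a : Sig → ℕ) (Rules : Set (CondRule Sig))
    (hsc : SemiClosed Rules) (hll : LeftLinear Rules) (hralg : RightAlgebraic Rules)
    (harr : SysRespectsArity a Rules)
    (S : Set (Tm Sig)) (hS : CondStable Rules a S)
    (i : ℕ) (s t : Tm Sig) (hs : s ∈ S) (ht : t ∈ S)
    (hred : Relation.ReflTransGen (fun x y : Tm Sig => Beta x y ∨ CondRel Rules i x y) s t) :
    ∃ s' t', Relation.ReflTransGen Beta s s' ∧
      Relation.ReflTransGen (CondRel Rules i) s' t' ∧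
      Relation.ReflTransGen Beta t t' := by
  have hst := condP_stable hsc hll hralg i
  rw [condRel_eq_rStep] at hred ⊢
  suffices h : ∃ s' t', ReflTransGen PB s s' ∧
      ReflTransGen (RStep (CondP Rules i)) s' t' ∧ ReflTransGen PB t t' by
    obtain ⟨s', t', h₁, h₂, h₃⟩ := h
    exact ⟨s', t', pbStar_beta h₁, h₂, pbStar_beta h₃⟩
  clear ht
  induction hred with
  | refl => exact ⟨s, s, .refl, .refl, .refl⟩
  | @tail t u _ hstep ih =>
    obtain ⟨s', t', h₁, h₂, h₃⟩ := ih
    rcases hstep with hβ | hR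
    · refine ⟨cd s', cd t', h₁.tail (PB.to_cd s'), ?_, ?_⟩
      · exact hS.rStar_cd harr hralg hst (hS.beta_star hs (pbStar_beta h₁)) h₂
      · exact (h₃.lift cd fun _ _ h => h.cd).head hβ.pb.triangle
    · obtain ⟨v, h₄, h₅⟩ := PB.commute_star hll hst (.single hR) h₃
      exact ⟨s', v, h₁, h₂.trans h₄, h₅⟩
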